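/- Let (M, Ω, V) be a graded von Neumann algebra and let α denote the modular flow t ↦ Ad_{Δ^{it}} associated to Ω. (i) If M is asymptotically abelian, i.e. [α_t(x), y] → 0 in the weak operator topology as t → ∞ for all x, y ∈ M, then the centralizer Z_Ω(M) equals the center Z(M), and in particular Z(M, V) ⊆ Z(M). (ii) If M is V-graded asymptotically abelian, i.e. the graded commutator [α_t(x), y]_V := α_t(x) y − (V y V) α_t(x) → 0 in the weak operator topology as t → ∞ for all x, y ∈ M, then Z(M, V) = Z_Ω(M) ⊆ Z(M). -/

import Mathlib

open scoped InnerProductSpace ComplexOrder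

noncomputable section

variable {H : Type*} [NormedAddCommGroup H] [InnerProductSpace ℂ H] [CompleteSpace H]

/-- A graded von Neumann algebra in standard form: a von Neumann algebra `M` with a cyclic
and separating vector `Ω`, the associated modular data `(J, Δ^{it})` (characterized by the
Tomita-Takesaki relations below), and a `ℤ₂`-grading `V`. -/
structure GradedVN (H : Type*) [NormedAddCommGroup H] [InnerProductSpace ℂ H]
    [CompleteSpace H] where
  M : VonNeumannAlgebra H
  Ω : H
  cyclic : Dense {ξ : H | ∃ x ∈ M, x Ω = ξ}
  separating : ∀ x ∈ M, x Ω = 0 → x = 0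
  /-- the modular conjugation (an antiunitary involution) -/
  J : H → H
  J_add : ∀ ξ η, J (ξ + η) = J ξ + J η
  J_smul : ∀ (c : ℂ) (ξ), J (c • ξ) = starRingEnd ℂ c • J ξ
  J_inner : ∀ ξ η, ⟪J ξ, J η⟫_ℂ = ⟪η, ξ⟫_ℂ
  J_invol : ∀ ξ, J (J ξ) = ξ
  J_Ω : J Ω = Ω
  /-- the modular group `Δ^{it}` -/
  U : ℝ → H ≃ₗᵢ[ℂ] H
  U_zero : ∀ ξ, U 0 ξ = ξ
  U_add : ∀ s t ξ, U (s + t) ξ = U s (U t ξ)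
  U_cont : ∀ ξ, Continuous fun t : ℝ => U t ξ
  U_Ω : ∀ t, U t Ω = Ω
  J_U : ∀ t ξ, J (U t ξ) = U t (J ξ)
  flow_mem : ∀ t : ℝ, ∀ x ∈ M, ∃ y ∈ M, ∀ ξ, y ξ = U t (x (U (-t) ξ))
  /-- `J M J ⊆ M'` -/
  tomita : ∀ x ∈ M, ∀ y ∈ M, ∀ ξ, J (x (J (y ξ))) = y (J (x (J ξ)))
  /-- `S = J Δ^{1/2}` maps `xΩ` to `x*Ω`, expressed via analytic continuation of the
  modular group. -/
  S_cond : ∀ x ∈ M, ∀ f : ℂ → H, Differentiable ℂ f → (∀ t : ℝ, f (t : ℂ) = U t (x Ω)) →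
    J (f (-(Complex.I) / 2)) = star x Ω
  /-- the grading -/
  V : H →L[ℂ] H
  V_star : star V = V
  V_invol : ∀ ξ, V (V ξ) = ξ
  V_Ω : V Ω = Ω
  V_mem : ∀ x ∈ M, ∃ y ∈ M, ∀ ξ, y ξ = V (x (V ξ))

namespace GradedVN

variable (N : GradedVN H)

/-- The `V`-twisted center `Z(M, V) = {x ∈ M | J x* J = x V}`. -/
def twistedCenter : Set (H →L[ℂ] H) :=
  {x | x ∈ N.M ∧ ∀ ξ, N.J (star x (N.J ξ)) = x (N.V ξ)}

/-- The center `Z(M)` of `M`. -/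
def centerSet : Set (H →L[ℂ] H) :=
  {z | z ∈ N.M ∧ ∀ y ∈ N.M, z * y = y * z}

/-- The `Ad_V`-fixed points `M^γ`. -/
def gammaFixed : Set (H →L[ℂ] H) :=
  {x | x ∈ N.M ∧ ∀ ξ, N.V (x (N.V ξ)) = x ξ}

/-- The fixed points `M^α` of the modular flow. -/
def flowFixed : Set (H →L[ℂ] H) :=
  {x | x ∈ N.M ∧ ∀ (t : ℝ) (ξ), x (N.U t ξ) = N.U t (x ξ)}

/-- The centralizer `Z_Ω(M)`. -/
def centralizerSet : Set (H →L[ℂ] H) :=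
  {x | x ∈ N.M ∧ ∀ y ∈ N.M, ⟪N.Ω, x (y N.Ω)⟫_ℂ = ⟪N.Ω, y (x N.Ω)⟫_ℂ}

/-- The twisted center of the reduced algebra `(M_p, V_p)` for a central `Ad_V`-invariant
projection `p` (for such `p`, the modular conjugation of `(pMp, pΩ)` is `J` restricted
to `pH`, so the relative twisted center consists of the `p`-supported elements of `M`
satisfying the twisted-center relation). -/
def tcRel (p : H →L[ℂ] H) : Set (H →L[ℂ] H) :=
  {x | x ∈ N.M ∧ x * p = x ∧ p * x = x ∧ ∀ ξ, N.J (star x (N.J ξ)) = x (N.V ξ)}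

/-- `p` is an `Ad_V`-invariant central projection. -/
def IsCentralInvProj (p : H →L[ℂ] H) : Prop :=
  p ∈ N.centerSet ∧ star p = p ∧ p * p = p ∧ ∀ ξ, N.V (p (N.V ξ)) = p ξ

/-- `p` is an `Ad_V`-invariant central projection carrying a partial isometry in the
relative twisted center which is unitary on `pH`. -/
def HasPI (p : H →L[ℂ] H) : Prop :=
  N.IsCentralInvProj p ∧ ∃ u ∈ N.tcRel p, star u * u = p ∧ u * star u = p

/-- Asymptotically abelian modular flow: `[α_t(x), y] → 0` weakly as `t → ∞`. -/
def AsympAbelian : Prop :=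
  ∀ x ∈ N.M, ∀ y ∈ N.M, ∀ ξ η : H,
    Filter.Tendsto
      (fun t : ℝ => ⟪ξ, N.U t (x (N.U (-t) (y η))) - y (N.U t (x (N.U (-t) η)))⟫_ℂ)
      Filter.atTop (nhds 0)

/-- `V`-graded asymptotically abelian modular flow:
`[α_t(x), y]_V = α_t(x) y − (V y V) α_t(x) → 0` weakly as `t → ∞`. -/
def GradedAsympAbelian : Prop :=
  ∀ x ∈ N.M, ∀ y ∈ N.M, ∀ ξ η : H,
    Filter.Tendsto
      (fun t : ℝ =>
        ⟪ξ, N.U t (x (N.U (-t) (y η))) - N.V (y (N.V (N.U t (x (N.U (-t) η)))))⟫_ℂ)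
      Filter.atTop (nhds 0)

end GradedVN

/-!
The heart of the proof is the inclusion `Z_Ω(M) ⊆ M^α`. For `ξ ∈ H`, the Gaussian smoothing
`f_ξ(z) = ∫ exp(-a(s - z)²) Δ^{is} ξ ds` is entire and satisfies `f_ξ(z + t) = Δ^{it} f_ξ(z)` for
real `t`, so `f_ξ(z - i/2)` plays the role of `Δ^{1/2} f_ξ(z)`. The relation `J Δ^{1/2} x Ω = x* Ω`,
applied to the smoothing of `x*`, gives `f_ξ(z - i/2) = f_{J x Ω}(z)` with `ξ = x* Ω`. If `x` lies
in the centralizer, testing against the vectors `y Ω` also gives `f_ξ(z) = f_{J x Ω}(z - i/2)`.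
Hence `f_ξ` is `i`-periodic, so bounded, so constant by Liouville's theorem; letting `a → ∞` shows
that `x* Ω`, and with it `x`, is invariant under the flow.

On a flow-invariant `x` the asymptotic (graded) commutation relation holds exactly. In the graded
case, `x y = γ(y) x` for all `x ∈ M^α`, where `γ = Ad_V`; applied to `x`, `x*` and `x x*` this
yields `(y - γ(y)) x x* = 0`, and therefore `x y = γ(y) x = y x`.
-/

open MeasureTheory Filter Topology

section EntireFunctions

variable {E : Type*} [NormedAddCommGroup E] [NormedSpace ℂ E]

theorem eq_of_forall_ofReal_eq_of_differentiable [CompleteSpace E] {f g : ℂ → E}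
    (hf : Differentiable ℂ f) (hg : Differentiable ℂ g) (hfg : ∀ t : ℝ, f t = g t) : f = g := by
  have ofReal_tendsto : Tendsto ((↑) : ℝ → ℂ) (𝓝[≠] 0) (𝓝[≠] 0) :=
    Complex.continuous_ofReal.continuousWithinAt.tendsto_nhdsWithin fun t ht => by simpa using ht
  exact AnalyticOnNhd.eq_of_frequently_eq (z₀ := 0) (fun z _ => hf.analyticAt z)
    (fun z _ => hg.analyticAt z)
    (ofReal_tendsto.frequently (Eventually.of_forall hfg).frequently)

theorem apply_eq_apply_of_periodic_of_norm_add_ofReal {f : ℂ → E}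
    (hf : Differentiable ℂ f) {p : ℝ} (hp : 0 < p) (hper : Function.Periodic f (p * Complex.I))
    (hnorm : ∀ z (t : ℝ), ‖f (z + t)‖ = ‖f z‖) (z w : ℂ) : f z = f w := by
  have hf_cont : Continuous f := hf.continuous
  have hper_im : Function.Periodic (fun y : ℝ => f (y * Complex.I)) p := fun y => by
    simpa [add_mul] using hper (y * Complex.I)
  obtain ⟨C, hC⟩ := (isCompact_Icc (a := (0 : ℝ)) (b := 0 + p)).exists_bound_of_continuousOn
    (f := fun y : ℝ => f (y * Complex.I)) (by fun_prop)
  refine hf.apply_eq_apply_of_bounded (isBounded_iff_forall_norm_le.2 ⟨C, ?_⟩) z w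
  rintro _ ⟨ζ, rfl⟩
  obtain ⟨y, hy, hζy⟩ := hper_im.exists_mem_Ico hp ζ.im 0
  calc ‖f ζ‖ = ‖f (ζ.im * Complex.I + ζ.re)‖ := by rw [add_comm, Complex.re_add_im]
    _ = ‖f (y * Complex.I)‖ := by rw [hnorm, hζy]
    _ ≤ C := hC y (Set.Ico_subset_Icc_self hy)

end EntireFunctions

section GaussianKernel

/-- The Gaussian `s ↦ exp (-a (s - z)²)` on the real line with complex center `z`. Its holomorphic
dependence on `z` is what makes Gaussian smoothings entire. -/
def gaussianKernel (a : ℝ) (z : ℂ) (s : ℝ) : ℂ :=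
  Complex.exp (-a * (s - z) ^ 2)

theorem continuous_gaussianKernel (a : ℝ) (z : ℂ) : Continuous (gaussianKernel a z) := by
  unfold gaussianKernel
  fun_prop

theorem gaussianKernel_zero (a s : ℝ) : gaussianKernel a 0 s = Real.exp (-a * s ^ 2) := by
  simp [gaussianKernel]

theorem gaussianKernel_add_ofReal (a : ℝ) (z : ℂ) (s t : ℝ) :
    gaussianKernel a (z + t) (s + t) = gaussianKernel a z s := by
  simp [gaussianKernel]

theorem conj_gaussianKernel (a : ℝ) (z : ℂ) (s : ℝ) :
    starRingEnd ℂ (gaussianKernel a z s) = gaussianKernel a (starRingEnd ℂ z) s := by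
  simp [gaussianKernel, ← Complex.exp_conj]

theorem gaussianKernel_neg_neg (a : ℝ) (z : ℂ) (s : ℝ) :
    gaussianKernel a (-z) (-s) = gaussianKernel a z s := by
  simp only [gaussianKernel, Complex.ofReal_neg]
  ring_nf

theorem norm_gaussianKernel (a : ℝ) (z : ℂ) (s : ℝ) :
    ‖gaussianKernel a z s‖ = Real.exp (-a * ((s - z.re) ^ 2 - z.im ^ 2)) := by
  rw [gaussianKernel, Complex.norm_exp]
  simp [pow_two]

theorem norm_gaussianKernel_le {a : ℝ} (ha : 0 ≤ a) {z w : ℂ} (hzw : ‖z - w‖ ≤ 1) (s : ℝ) :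
    ‖gaussianKernel a z s‖ ≤
      Real.exp (a * (1 + (|w.im| + 1) ^ 2)) * Real.exp (-(a / 2) * (s - w.re) ^ 2) := by
  have hre : |z.re - w.re| ≤ 1 := (Complex.abs_re_le_norm (z - w)).trans hzw
  have him : |z.im - w.im| ≤ 1 := (Complex.abs_im_le_norm (z - w)).trans hzw
  have hre_sq : (z.re - w.re) ^ 2 ≤ 1 := (sq_le_one_iff_abs_le_one _).2 hre
  have him_sq : z.im ^ 2 ≤ (|w.im| + 1) ^ 2 := by
    rw [← sq_abs]
    gcongr
    linarith [abs_sub_abs_le_abs_sub z.im w.im]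
  have hsq : (s - w.re) ^ 2 / 2 ≤ (s - z.re) ^ 2 + 1 := by
    nlinarith [sq_nonneg ((s - z.re) - (z.re - w.re))]
  rw [norm_gaussianKernel, ← Real.exp_add, Real.exp_le_exp]
  nlinarith

theorem integrable_gaussianKernel {a : ℝ} (ha : 0 < a) (z : ℂ) :
    Integrable (gaussianKernel a z) := by
  refine (((integrable_exp_neg_mul_sq (half_pos ha)).comp_sub_right z.re).const_mul _).mono'
    (continuous_gaussianKernel a z).aestronglyMeasurable
    (Eventually.of_forall (norm_gaussianKernel_le ha.le (w := z) (by simp)))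

theorem hasDerivAt_gaussianKernel (a : ℝ) (z : ℂ) (s : ℝ) :
    HasDerivAt (gaussianKernel a · s) (2 * a * (s - z) * gaussianKernel a z s) z := by
  have hexponent : HasDerivAt (fun z : ℂ => -a * (s - z) ^ 2) (2 * a * (s - z)) z := by
    convert! (((hasDerivAt_id z).const_sub (s : ℂ)).pow 2).const_mul (-(a : ℂ)) using 1
    simp
    ring
  simpa only [gaussianKernel, mul_comm] using hexponent.cexp

theorem exists_integrable_bound_deriv_gaussianKernel {a : ℝ} (ha : 0 < a) (w : ℂ) :
    ∃ B : ℝ → ℝ, Integrable B ∧ ∀ s : ℝ, ∀ z ∈ Metric.ball w 1,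
      ‖2 * a * (s - z) * gaussianKernel a z s‖ ≤ B s := by
  let B (u : ℝ) : ℝ := 2 * a * (|u| + (|w.im| + 1)) *
    (Real.exp (a * (1 + (|w.im| + 1) ^ 2)) * Real.exp (-(a / 2) * u ^ 2))
  have hB : Integrable B := by
    have hlin : Integrable fun u : ℝ => |u| * Real.exp (-(a / 2) * u ^ 2) := by
      simpa using (integrable_mul_exp_neg_mul_sq (half_pos ha)).norm
    have hconst := (integrable_exp_neg_mul_sq (half_pos ha)).const_mul (|w.im| + 1)
    refine ((hlin.add hconst).const_mul
      (2 * a * Real.exp (a * (1 + (|w.im| + 1) ^ 2)))).congr (Eventually.of_forall fun u => ?_)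
    simp only [B, Pi.add_apply]
    ring
  refine ⟨fun s => B (s - w.re), hB.comp_sub_right w.re, fun s z hz => ?_⟩
  have hzw : ‖z - w‖ ≤ 1 := (mem_ball_iff_norm.1 hz).le
  have hdist : ‖(s : ℂ) - z‖ ≤ |s - w.re| + (|w.im| + 1) := by
    have hsw : ‖(s : ℂ) - w‖ ≤ |s - w.re| + |w.im| := by
      simpa using Complex.norm_le_abs_re_add_abs_im ((s : ℂ) - w)
    have := norm_sub_le_norm_sub_add_norm_sub (s : ℂ) w z
    rw [norm_sub_rev w z] at this
    linarith
  have hkernel := norm_gaussianKernel_le ha.le hzw s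
  simp only [norm_mul, Complex.norm_ofNat, Complex.norm_real, Real.norm_of_nonneg ha.le, B]
  gcongr

variable {E : Type*} [NormedAddCommGroup E] [NormedSpace ℂ E] {a C : ℝ} {h : ℝ → E}

theorem integrable_gaussianKernel_smul (ha : 0 < a) (z : ℂ) (hm : AEStronglyMeasurable h)
    (hC : ∀ s, ‖h s‖ ≤ C) : Integrable fun s => gaussianKernel a z s • h s :=
  (integrable_gaussianKernel ha z).smul_bdd C hm (Eventually.of_forall hC)

theorem differentiable_integral_gaussianKernel_smul (ha : 0 < a) (hm : AEStronglyMeasurable h)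
    (hC : ∀ s, ‖h s‖ ≤ C) : Differentiable ℂ fun z => ∫ s, gaussianKernel a z s • h s := by
  intro w
  obtain ⟨B, hB, hbound⟩ := exists_integrable_bound_deriv_gaussianKernel ha w
  have hmeas : ∀ z, AEStronglyMeasurable fun s => gaussianKernel a z s • h s := fun z =>
    (integrable_gaussianKernel_smul ha z hm hC).aestronglyMeasurable
  have hmeas_deriv : AEStronglyMeasurable fun s : ℝ =>
      (2 * a * (s - w) * gaussianKernel a w s) • h s :=
    (Continuous.aestronglyMeasurable
      (by have := continuous_gaussianKernel a w; fun_prop)).smul hm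
  refine (hasDerivAt_integral_of_dominated_loc_of_deriv_le (bound := fun s => B s * C)
    (F' := fun z s => (2 * a * (s - z) * gaussianKernel a z s) • h s)
    (Metric.ball_mem_nhds w one_pos) (Eventually.of_forall hmeas)
    (integrable_gaussianKernel_smul ha w hm hC) hmeas_deriv
    (Eventually.of_forall fun s z hz => ?_) (hB.mul_const C)
    (Eventually.of_forall fun s z _ => ?_)).2.differentiableAt
  · have hsz := hbound s z hz
    rw [norm_smul]
    exact mul_le_mul hsz (hC s) (norm_nonneg _) ((norm_nonneg _).trans hsz)
  · exact (hasDerivAt_gaussianKernel a z s).smul_const (h s)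

end GaussianKernel

section IsometryFlow

variable {E : Type*} [NormedAddCommGroup E] [NormedSpace ℂ E]

/-- `U` is a strongly continuous one-parameter group of linear isometries, such as the modular group
`Δ^{it}`. The law `U 0 = 1` follows from additivity because every `U t` is invertible. -/
structure IsIsometryFlow (U : ℝ → E ≃ₗᵢ[ℂ] E) : Prop where
  apply_add : ∀ s t ξ, U (s + t) ξ = U s (U t ξ)
  continuous : ∀ ξ, Continuous fun t => U t ξ

/-- The Gaussian smoothing `z ↦ ∫ exp (-a (s - z)²) U s ξ ds` of the orbit of `ξ` under `U`. It is
an entire function on which real translation acts as `U`, so its values off the real line serve as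
a substitute for the analytic continuation of the orbit of `ξ`. -/
def gaussianSmoothing (U : ℝ → E ≃ₗᵢ[ℂ] E) (a : ℝ) (ξ : E) (z : ℂ) : E :=
  ∫ s : ℝ, gaussianKernel a z s • U s ξ

namespace IsIsometryFlow

variable {U : ℝ → E ≃ₗᵢ[ℂ] E} (hU : IsIsometryFlow U) {a : ℝ}
include hU

theorem apply_zero (ξ : E) : U 0 ξ = ξ :=
  (U 0).injective (by rw [← hU.apply_add, add_zero])

theorem apply_neg_apply (t : ℝ) (ξ : E) : U (-t) (U t ξ) = ξ := by
  rw [← hU.apply_add, neg_add_cancel, hU.apply_zero]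

theorem apply_apply_neg (t : ℝ) (ξ : E) : U t (U (-t) ξ) = ξ := by
  rw [← hU.apply_add, add_neg_cancel, hU.apply_zero]

theorem continuous_uncurry : Continuous fun p : ℝ × E => U p.1 p.2 :=
  continuous_prod_of_continuous_lipschitzWith' _ 1 (fun t => (U t).lipschitz) hU.continuous

theorem integrable_gaussianKernel_smul_map (ha : 0 < a) (ξ : E) (z : ℂ) :
    Integrable fun s => gaussianKernel a z s • U s ξ :=
  integrable_gaussianKernel_smul ha z (hU.continuous ξ).aestronglyMeasurable
    fun s => ((U s).norm_map ξ).le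

theorem differentiable_gaussianSmoothing (ha : 0 < a) (ξ : E) :
    Differentiable ℂ (gaussianSmoothing U a ξ) :=
  differentiable_integral_gaussianKernel_smul ha (hU.continuous ξ).aestronglyMeasurable
    fun s => ((U s).norm_map ξ).le

theorem gaussianSmoothing_map (ξ : E) (z : ℂ) (t : ℝ) :
    gaussianSmoothing U a (U t ξ) z = gaussianSmoothing U a ξ (z + t) := by
  rw [gaussianSmoothing, gaussianSmoothing,
    ← integral_add_right_eq_self (fun s => gaussianKernel a (z + t) s • U s ξ) t]
  simp only [gaussianKernel_add_ofReal, hU.apply_add]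

variable [CompleteSpace E]

theorem gaussianSmoothing_add_ofReal (ξ : E) (z : ℂ) (t : ℝ) :
    gaussianSmoothing U a ξ (z + t) = U t (gaussianSmoothing U a ξ z) := by
  rw [← hU.gaussianSmoothing_map, gaussianSmoothing, gaussianSmoothing,
    ← LinearIsometryEquiv.coe_toLinearIsometry, ← LinearIsometry.integral_comp_comm]
  simp only [LinearIsometryEquiv.coe_toLinearIsometry, map_smul, ← hU.apply_add, add_comm t]

theorem gaussianSmoothing_add_eq_add (ha : 0 < a) {ξ η : E} {z w : ℂ}
    (h : gaussianSmoothing U a ξ z = gaussianSmoothing U a η w) (v : ℂ) :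
    gaussianSmoothing U a ξ (v + z) = gaussianSmoothing U a η (v + w) := by
  refine congrFun (eq_of_forall_ofReal_eq_of_differentiable
    (f := fun v => gaussianSmoothing U a ξ (v + z))
    (g := fun v => gaussianSmoothing U a η (v + w))
    ((hU.differentiable_gaussianSmoothing ha ξ).comp (by fun_prop))
    ((hU.differentiable_gaussianSmoothing ha η).comp (by fun_prop)) fun t => ?_) v
  rw [add_comm _ z, add_comm _ w, hU.gaussianSmoothing_add_ofReal,
    hU.gaussianSmoothing_add_ofReal, h]

theorem tendsto_smul_gaussianSmoothing (ξ : E) :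
    Tendsto (fun b : ℝ => b • gaussianSmoothing U (b ^ 2) ξ 0) atTop (𝓝 (√Real.pi • ξ)) := by
  have hrescale : ∀ b : ℝ, 0 < b → b • gaussianSmoothing U (b ^ 2) ξ 0 =
      ∫ s : ℝ, gaussianKernel 1 0 s • U (b⁻¹ * s) ξ := fun b hb => by
    have hsubst := Measure.integral_comp_mul_left
      (fun s => gaussianKernel (b ^ 2) 0 s • U s ξ) b⁻¹
    rw [inv_inv, abs_of_pos hb] at hsubst
    rw [gaussianSmoothing, ← hsubst]
    congr! 3 with s
    rw [gaussianKernel_zero, gaussianKernel_zero]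
    field_simp
  have hlimit : √Real.pi • ξ = ∫ s : ℝ, gaussianKernel 1 0 s • ξ := by
    simp_rw [integral_smul_const, gaussianKernel_zero, integral_complex_ofReal, integral_gaussian,
      div_one, Complex.coe_smul]
  rw [hlimit]
  refine Tendsto.congr' ((eventually_gt_atTop 0).mono fun b hb => (hrescale b hb).symm) ?_
  refine tendsto_integral_filter_of_dominated_convergence
    (fun s => ‖gaussianKernel 1 0 s • ξ‖) (Eventually.of_forall fun b => ?_)
    (Eventually.of_forall fun b => Eventually.of_forall fun s => ?_) ?_
    (Eventually.of_forall fun s => ?_)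
  · have hkernel := continuous_gaussianKernel 1 0
    have horbit := (hU.continuous ξ).comp (continuous_const_mul b⁻¹)
    exact (hkernel.smul horbit).aestronglyMeasurable
  · rw [norm_smul, norm_smul, LinearIsometryEquiv.norm_map]
  · exact ((integrable_gaussianKernel one_pos 0).smul_const ξ).norm
  · have horbit : Tendsto (fun b : ℝ => U (b⁻¹ * s) ξ) atTop (𝓝 (U (0 * s) ξ)) :=
      ((hU.continuous ξ).tendsto _).comp (tendsto_inv_atTop_zero.mul_const s)
    rw [zero_mul, hU.apply_zero] at horbit
    exact horbit.const_smul _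

theorem eq_of_forall_gaussianSmoothing_eq {ξ η : E}
    (h : ∀ a > 0, gaussianSmoothing U a ξ 0 = gaussianSmoothing U a η 0) : ξ = η := by
  have hlim : √Real.pi • ξ = √Real.pi • η := by
    refine tendsto_nhds_unique (hU.tendsto_smul_gaussianSmoothing ξ)
      ((hU.tendsto_smul_gaussianSmoothing η).congr' ?_)
    filter_upwards [eventually_gt_atTop 0] with b hb
    rw [h _ (pow_pos hb 2)]
  exact smul_right_injective E (Real.sqrt_pos.2 Real.pi_pos).ne' hlim

theorem map_eq_self_of_gaussianSmoothing_periodic {ξ : E} {p : ℝ} (hp : 0 < p)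
    (hper : ∀ a > 0, Function.Periodic (gaussianSmoothing U a ξ) (p * Complex.I)) (t : ℝ) :
    U t ξ = ξ :=
  hU.eq_of_forall_gaussianSmoothing_eq fun a ha => by
    rw [hU.gaussianSmoothing_map]
    refine apply_eq_apply_of_periodic_of_norm_add_ofReal (hU.differentiable_gaussianSmoothing ha ξ)
      hp (hper a ha) (fun z s => ?_) _ _
    rw [hU.gaussianSmoothing_add_ofReal, LinearIsometryEquiv.norm_map]

end IsIsometryFlow

end IsometryFlow

section OperatorFlow

variable {E : Type*} [NormedAddCommGroup E] [NormedSpace ℂ E] {U : ℝ → E ≃ₗᵢ[ℂ] E} {a : ℝ}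

/-- The action `y ↦ U t y U (-t)` on bounded operators induced by a flow `U`. For the modular group
it is the modular flow `α_t = Ad_{Δ^{it}}`. -/
def flowConj (U : ℝ → E ≃ₗᵢ[ℂ] E) (t : ℝ) (y : E →L[ℂ] E) : E →L[ℂ] E :=
  (U t : E →L[ℂ] E) ∘L y ∘L (U (-t) : E →L[ℂ] E)

@[simp]
theorem flowConj_apply (t : ℝ) (y : E →L[ℂ] E) (ξ : E) :
    flowConj U t y ξ = U t (y (U (-t) ξ)) :=
  rfl

theorem norm_flowConj_apply_le (t : ℝ) (y : E →L[ℂ] E) (ξ : E) :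
    ‖flowConj U t y ξ‖ ≤ ‖y‖ * ‖ξ‖ := by
  simpa using y.le_opNorm (U (-t) ξ)

namespace IsIsometryFlow

variable (hU : IsIsometryFlow U) (ha : 0 < a) (y : E →L[ℂ] E)
include hU ha

theorem integrable_gaussianKernel_smul_flowConj (ξ : E) :
    Integrable fun s => gaussianKernel a 0 s • flowConj U s y ξ := by
  have horbit : Continuous fun s => flowConj U s y ξ :=
    hU.continuous_uncurry.comp
      (continuous_id.prodMk (y.continuous.comp ((hU.continuous ξ).comp continuous_neg)))
  exact integrable_gaussianKernel_smul ha 0 horbit.aestronglyMeasurable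
    (norm_flowConj_apply_le · y ξ)

/-- The Gaussian average `∫ exp (-a s²) U s y U (-s) ds` of the orbit of an operator `y`, which
realizes smoothed vectors inside a von Neumann algebra. The integral is taken strongly (pointwise),
since the orbit need not be norm continuous. -/
def gaussianAverage : E →L[ℂ] E :=
  LinearMap.mkContinuous
    { toFun := fun ξ => ∫ s, gaussianKernel a 0 s • flowConj U s y ξ
      map_add' := fun ξ η => by
        simp only [map_add, smul_add]
        exact integral_add (hU.integrable_gaussianKernel_smul_flowConj ha y ξ)
          (hU.integrable_gaussianKernel_smul_flowConj ha y η)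
      map_smul' := fun c ξ => by
        simp only [map_smul, smul_comm _ c, integral_smul, RingHom.id_apply] }
    ((∫ s, ‖gaussianKernel a 0 s‖) * ‖y‖) fun ξ => by
      rw [mul_assoc, ← integral_mul_const]
      refine norm_integral_le_of_norm_le ((integrable_gaussianKernel ha 0).norm.mul_const _)
        (Eventually.of_forall fun s => ?_)
      rw [norm_smul]
      gcongr
      exact norm_flowConj_apply_le s y ξ

theorem gaussianAverage_apply (ξ : E) :
    hU.gaussianAverage ha y ξ = ∫ s, gaussianKernel a 0 s • flowConj U s y ξ :=
  rfl

theorem gaussianAverage_apply_of_forall_map_eq {ξ : E} (hξ : ∀ t, U t ξ = ξ) :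
    hU.gaussianAverage ha y ξ = gaussianSmoothing U a (y ξ) 0 := by
  simp only [gaussianAverage_apply, flowConj_apply, hξ, gaussianSmoothing]

end IsIsometryFlow

end OperatorFlow

section Hilbert

variable {K : Type*} [NormedAddCommGroup K] [InnerProductSpace ℂ K] {U : ℝ → K ≃ₗᵢ[ℂ] K}

theorem IsIsometryFlow.inner_map_right (hU : IsIsometryFlow U) (t : ℝ) (ξ η : K) :
    ⟪ξ, U t η⟫_ℂ = ⟪U (-t) ξ, η⟫_ℂ := by
  rw [← (U (-t)).inner_map_map, hU.apply_neg_apply]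

end Hilbert

namespace IsIsometryFlow

variable {U : ℝ → H ≃ₗᵢ[ℂ] H} (hU : IsIsometryFlow U) {a : ℝ}
include hU

theorem inner_gaussianSmoothing_right (ha : 0 < a) (ξ η : H) (z : ℂ) :
    ⟪ξ, gaussianSmoothing U a η z⟫_ℂ = ⟪gaussianSmoothing U a ξ (-starRingEnd ℂ z), η⟫_ℂ := by
  rw [gaussianSmoothing, gaussianSmoothing,
    ← integral_inner (hU.integrable_gaussianKernel_smul_map ha η z), ← inner_conj_symm,
    ← integral_inner (hU.integrable_gaussianKernel_smul_map ha ξ _), ← integral_conj,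
    ← integral_neg_eq_self]
  congr! 2 with s
  rw [inner_smul_right, inner_smul_right, map_mul, inner_conj_symm, conj_gaussianKernel, map_neg,
    Complex.conj_conj, ← gaussianKernel_neg_neg, neg_neg, hU.inner_map_right, neg_neg]

theorem star_flowConj (t : ℝ) (y : H →L[ℂ] H) :
    star (flowConj U t y) = flowConj U t (star y) := by
  ext ξ
  refine ext_inner_left ℂ fun η => ?_
  simp only [ContinuousLinearMap.star_eq_adjoint, ContinuousLinearMap.adjoint_inner_right,
    flowConj_apply, hU.inner_map_right t]
  rw [hU.inner_map_right, neg_neg]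

theorem star_gaussianAverage (ha : 0 < a) (y : H →L[ℂ] H) :
    star (hU.gaussianAverage ha y) = hU.gaussianAverage ha (star y) := by
  ext ξ
  refine ext_inner_left ℂ fun η => ?_
  rw [ContinuousLinearMap.star_eq_adjoint, ContinuousLinearMap.adjoint_inner_right,
    gaussianAverage_apply, gaussianAverage_apply,
    ← integral_inner (hU.integrable_gaussianKernel_smul_flowConj ha (star y) ξ),
    ← inner_conj_symm, ← integral_inner (hU.integrable_gaussianKernel_smul_flowConj ha y η),
    ← integral_conj]
  congr! 2 with s
  rw [inner_smul_right, inner_smul_right, map_mul, inner_conj_symm, conj_gaussianKernel,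
    map_zero, ← hU.star_flowConj, ContinuousLinearMap.star_eq_adjoint,
    ContinuousLinearMap.adjoint_inner_right]

theorem gaussianAverage_mem (ha : 0 < a) {M : VonNeumannAlgebra H} {y : H →L[ℂ] H}
    (hy : ∀ t, flowConj U t y ∈ M) : hU.gaussianAverage ha y ∈ M := by
  rw [← M.commutant_commutant, VonNeumannAlgebra.mem_commutant_iff]
  intro m hm
  ext ξ
  have hcomm : ∀ s, m (flowConj U s y ξ) = flowConj U s y (m ξ) := fun s =>
    (DFunLike.congr_fun (VonNeumannAlgebra.mem_commutant_iff.1 hm _ (hy s)) ξ).symm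
  rw [mul_apply_eq_comp, mul_apply_eq_comp, gaussianAverage_apply, gaussianAverage_apply,
    ← m.integral_comp_comm (hU.integrable_gaussianKernel_smul_flowConj ha y ξ)]
  simp only [map_smul, hcomm]

end IsIsometryFlow

theorem mul_eq_mul_of_mul_mul_star_eq {A : Type*} [NonUnitalNormedRing A] [StarRing A]
    [CStarRing A] {x y w : A} (h : y * (x * star x) = w * (x * star x)) : y * x = w * x := by
  rw [← sub_eq_zero, ← sub_mul, ← CStarRing.mul_star_self_eq_zero_iff]
  calc (y - w) * x * star ((y - w) * x) = (y - w) * (x * star x) * star (y - w) := by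
        simp only [star_mul, mul_assoc]
    _ = 0 := by rw [sub_mul, h, sub_self, zero_mul]

namespace GradedVN

variable (N : GradedVN H)

theorem isIsometryFlow_U : IsIsometryFlow N.U :=
  ⟨N.U_add, N.U_cont⟩

theorem flowConj_mem {y : H →L[ℂ] H} (hy : y ∈ N.M) (t : ℝ) : flowConj N.U t y ∈ N.M := by
  obtain ⟨w, hw, hwy⟩ := N.flow_mem t y hy
  rwa [show flowConj N.U t y = w from ContinuousLinearMap.ext fun ξ => (hwy ξ).symm]

theorem gaussianAverage_apply_Ω {a : ℝ} (ha : 0 < a) (y : H →L[ℂ] H) :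
    N.isIsometryFlow_U.gaussianAverage ha y N.Ω = gaussianSmoothing N.U a (y N.Ω) 0 :=
  N.isIsometryFlow_U.gaussianAverage_apply_of_forall_map_eq ha y N.U_Ω

theorem norm_J (ξ : H) : ‖N.J ξ‖ = ‖ξ‖ := by
  rw [@norm_eq_sqrt_re_inner ℂ, N.J_inner, ← @norm_eq_sqrt_re_inner ℂ]

/-- The modular conjugation `J`, bundled as a conjugate-linear isometry so that it is continuous and
commutes with Bochner integrals. -/
def JIsometry : H →ₛₗᵢ[starRingEnd ℂ] H where
  toFun := N.J
  map_add' := N.J_add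
  map_smul' := N.J_smul
  norm_map' := N.norm_J

theorem J_gaussianSmoothing {a : ℝ} (ha : 0 < a) (ξ : H) (z : ℂ) :
    N.J (gaussianSmoothing N.U a ξ z) =
      gaussianSmoothing N.U a (N.J ξ) (starRingEnd ℂ z) := by
  have hcomm := N.JIsometry.toContinuousLinearMap.integral_comp_commSL RCLike.conj_smul
    (N.isIsometryFlow_U.integrable_gaussianKernel_smul_map ha ξ z)
  refine hcomm.symm.trans (integral_congr_ae (Eventually.of_forall fun s => ?_))
  change N.J (gaussianKernel a z s • N.U s ξ) = _
  rw [N.J_smul, N.J_U, conj_gaussianKernel]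

-- This is `Δ^{1/2} x* Ω = J x Ω`, the relation `J Δ^{1/2} x* Ω = x Ω`, after smoothing.
theorem gaussianSmoothing_star_Ω_sub_I_div_two {a : ℝ} (ha : 0 < a) {x : H →L[ℂ] H}
    (hx : x ∈ N.M) (z : ℂ) :
    gaussianSmoothing N.U a (star x N.Ω) (z - Complex.I / 2) =
      gaussianSmoothing N.U a (N.J (x N.Ω)) z := by
  have hU := N.isIsometryFlow_U
  have hJ : N.J (gaussianSmoothing N.U a (star x N.Ω) (-Complex.I / 2)) =
      gaussianSmoothing N.U a (x N.Ω) 0 := by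
    have hmem := hU.gaussianAverage_mem ha (N.flowConj_mem (star_mem hx))
    rw [N.S_cond _ hmem _ (hU.differentiable_gaussianSmoothing ha _) fun t => ?_,
      hU.star_gaussianAverage, star_star, N.gaussianAverage_apply_Ω]
    rw [N.gaussianAverage_apply_Ω, ← hU.gaussianSmoothing_add_ofReal, zero_add]
  have hzero : gaussianSmoothing N.U a (star x N.Ω) (-Complex.I / 2) =
      gaussianSmoothing N.U a (N.J (x N.Ω)) 0 := by
    rw [← N.J_invol (gaussianSmoothing N.U a (star x N.Ω) _), hJ, N.J_gaussianSmoothing ha,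
      map_zero]
  simpa only [neg_div, ← sub_eq_add_neg, add_zero] using
    hU.gaussianSmoothing_add_eq_add ha hzero z

theorem gaussianSmoothing_star_Ω_of_mem_centralizerSet {a : ℝ} (ha : 0 < a) {x : H →L[ℂ] H}
    (hx : x ∈ N.centralizerSet) (z : ℂ) :
    gaussianSmoothing N.U a (star x N.Ω) z =
      gaussianSmoothing N.U a (N.J (x N.Ω)) (z - Complex.I / 2) := by
  have hU := N.isIsometryFlow_U
  have htest : ∀ y ∈ N.M, ⟪gaussianSmoothing N.U a (star x N.Ω) 0, y N.Ω⟫_ℂ =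
      ⟪gaussianSmoothing N.U a (N.J (x N.Ω)) (0 - Complex.I / 2), y N.Ω⟫_ℂ := fun y hy => by
    let yₐ := hU.gaussianAverage ha y
    have hyₐ : yₐ ∈ N.M := hU.gaussianAverage_mem ha (N.flowConj_mem hy)
    calc ⟪gaussianSmoothing N.U a (star x N.Ω) 0, y N.Ω⟫_ℂ
        = ⟪star x N.Ω, yₐ N.Ω⟫_ℂ := by
          rw [N.gaussianAverage_apply_Ω, hU.inner_gaussianSmoothing_right ha, map_zero, neg_zero]
      _ = ⟪star yₐ N.Ω, x N.Ω⟫_ℂ := by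
          simp only [ContinuousLinearMap.star_eq_adjoint, ContinuousLinearMap.adjoint_inner_left,
            hx.2 yₐ hyₐ]
      _ = ⟪N.J (x N.Ω), N.J (gaussianSmoothing N.U a (star y N.Ω) 0)⟫_ℂ := by
          rw [hU.star_gaussianAverage, N.gaussianAverage_apply_Ω, N.J_inner]
      _ = ⟪N.J (x N.Ω), gaussianSmoothing N.U a (y N.Ω) (0 - Complex.I / 2)⟫_ℂ := by
          rw [N.J_gaussianSmoothing ha, map_zero,
            ← N.gaussianSmoothing_star_Ω_sub_I_div_two ha (star_mem hy), star_star]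
      _ = ⟪gaussianSmoothing N.U a (N.J (x N.Ω)) (0 - Complex.I / 2), y N.Ω⟫_ℂ := by
          rw [hU.inner_gaussianSmoothing_right ha]
          simp [neg_div, Complex.conj_ofNat]
  have hzero : gaussianSmoothing N.U a (star x N.Ω) 0 =
      gaussianSmoothing N.U a (N.J (x N.Ω)) (0 - Complex.I / 2) := by
    refine ext_inner_right ℂ fun ζ => congrFun (Continuous.ext_on N.cyclic (by fun_prop)
      (by fun_prop) ?_ : inner ℂ _ = inner ℂ _) ζ
    rintro _ ⟨y, hy, rfl⟩
    exact htest y hy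
  simpa only [add_zero, zero_sub, ← sub_eq_add_neg] using
    hU.gaussianSmoothing_add_eq_add ha hzero z

theorem U_star_Ω_of_mem_centralizerSet {x : H →L[ℂ] H} (hx : x ∈ N.centralizerSet) (t : ℝ) :
    N.U t (star x N.Ω) = star x N.Ω := by
  refine N.isIsometryFlow_U.map_eq_self_of_gaussianSmoothing_periodic one_pos
    (fun a ha z => ?_) t
  rw [N.gaussianSmoothing_star_Ω_of_mem_centralizerSet ha hx,
    ← N.gaussianSmoothing_star_Ω_sub_I_div_two ha hx.1]
  congr 1
  push_cast
  ring

theorem flowConj_eq_self_of_mem_flowFixed {x : H →L[ℂ] H} (hx : x ∈ N.flowFixed) (t : ℝ) :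
    flowConj N.U t x = x := by
  ext ξ
  rw [flowConj_apply, ← hx.2, N.isIsometryFlow_U.apply_apply_neg]

theorem mem_flowFixed_of_forall_U_apply_Ω {x : H →L[ℂ] H} (hx : x ∈ N.M)
    (hfix : ∀ t, N.U t (x N.Ω) = x N.Ω) : x ∈ N.flowFixed := by
  refine ⟨hx, fun t ξ => ?_⟩
  have hconj : flowConj N.U t x = x := by
    refine sub_eq_zero.1 (N.separating _ (sub_mem (N.flowConj_mem hx t) hx) ?_)
    rw [sub_apply, flowConj_apply, N.U_Ω, hfix, sub_self]
  have happly := DFunLike.congr_fun hconj (N.U t ξ)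
  rwa [flowConj_apply, N.isIsometryFlow_U.apply_neg_apply, eq_comm] at happly

theorem star_mem_flowFixed {x : H →L[ℂ] H} (hx : x ∈ N.flowFixed) : star x ∈ N.flowFixed := by
  refine N.mem_flowFixed_of_forall_U_apply_Ω (star_mem hx.1) fun t => ?_
  have happly := DFunLike.congr_fun (N.isIsometryFlow_U.star_flowConj t x) N.Ω
  rwa [N.flowConj_eq_self_of_mem_flowFixed hx, flowConj_apply, N.U_Ω, eq_comm] at happly

theorem mul_mem_flowFixed {x y : H →L[ℂ] H} (hx : x ∈ N.flowFixed) (hy : y ∈ N.flowFixed) :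
    x * y ∈ N.flowFixed :=
  ⟨mul_mem hx.1 hy.1, fun t ξ => by simp only [mul_apply_eq_comp, hy.2, hx.2]⟩

theorem centralizerSet_subset_flowFixed : N.centralizerSet ⊆ N.flowFixed := fun x hx => by
  simpa only [star_star] using N.star_mem_flowFixed
    (N.mem_flowFixed_of_forall_U_apply_Ω (star_mem hx.1) (N.U_star_Ω_of_mem_centralizerSet hx))

theorem centerSet_subset_centralizerSet : N.centerSet ⊆ N.centralizerSet := fun x hx =>
  ⟨hx.1, fun y hy => by rw [← mul_apply_eq_comp, hx.2 y hy, mul_apply_eq_comp]⟩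

theorem twistedCenter_subset_centralizerSet : N.twistedCenter ⊆ N.centralizerSet := by
  refine fun x hx => ⟨hx.1, fun y hy => ?_⟩
  have hJ : N.J (star x N.Ω) = x N.Ω := by simpa only [N.J_Ω, N.V_Ω] using hx.2 N.Ω
  have hcomm : N.J (star x (N.J (y N.Ω))) = y (x N.Ω) := by
    rw [N.tomita _ (star_mem hx.1) y hy, N.J_Ω, hJ]
  calc ⟪N.Ω, x (y N.Ω)⟫_ℂ = ⟪star x N.Ω, y N.Ω⟫_ℂ := by
        rw [ContinuousLinearMap.star_eq_adjoint, ContinuousLinearMap.adjoint_inner_left]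
    _ = ⟪N.J (y N.Ω), x N.Ω⟫_ℂ := by rw [← N.J_inner, hJ]
    _ = ⟪star x (N.J (y N.Ω)), N.Ω⟫_ℂ := by
        rw [ContinuousLinearMap.star_eq_adjoint, ContinuousLinearMap.adjoint_inner_left]
    _ = ⟪N.Ω, y (x N.Ω)⟫_ℂ := by rw [← N.J_inner, N.J_Ω, hcomm]

theorem mul_eq_mul_of_tendsto_of_mem_flowFixed {x y w : H →L[ℂ] H} (hx : x ∈ N.flowFixed)
    (h : ∀ ξ η : H, Tendsto
      (fun t => ⟪ξ, flowConj N.U t x (y η) - w (flowConj N.U t x η)⟫_ℂ) atTop (𝓝 0)) :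
    x * y = w * x := by
  ext η
  refine sub_eq_zero.1 (ext_inner_left ℂ fun ξ => ?_)
  have hlim := h ξ η
  simp only [N.flowConj_eq_self_of_mem_flowFixed hx] at hlim
  rw [inner_zero_right]
  exact tendsto_nhds_unique tendsto_const_nhds hlim

theorem AsympAbelian.flowFixed_subset_centerSet {N : GradedVN H} (h : N.AsympAbelian) :
    N.flowFixed ⊆ N.centerSet := fun x hx =>
  ⟨hx.1, fun y hy => N.mul_eq_mul_of_tendsto_of_mem_flowFixed hx (h x hx.1 y hy)⟩

/-- The grading automorphism `γ = Ad_V`, defined on all bounded operators. It is the twist in the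
graded commutator `[x, y]_V = x y - γ(y) x`. -/
def gamma (y : H →L[ℂ] H) : H →L[ℂ] H :=
  N.V * y * N.V

theorem gamma_mem {y : H →L[ℂ] H} (hy : y ∈ N.M) : N.gamma y ∈ N.M := by
  obtain ⟨w, hw, hwy⟩ := N.V_mem y hy
  rwa [show N.gamma y = w from ContinuousLinearMap.ext fun ξ => (hwy ξ).symm]

theorem gamma_gamma (y : H →L[ℂ] H) : N.gamma (N.gamma y) = y := by
  ext ξ
  simp only [gamma, mul_apply_eq_comp, N.V_invol]

theorem gamma_apply_Ω (y : H →L[ℂ] H) : N.gamma y N.Ω = N.V (y N.Ω) := by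
  rw [gamma, mul_apply_eq_comp, mul_apply_eq_comp, N.V_Ω]

namespace GradedAsympAbelian

variable {N} (h : N.GradedAsympAbelian)
include h

theorem mul_eq_gamma_mul {x y : H →L[ℂ] H} (hx : x ∈ N.flowFixed) (hy : y ∈ N.M) :
    x * y = N.gamma y * x :=
  N.mul_eq_mul_of_tendsto_of_mem_flowFixed hx (h x hx.1 y hy)

theorem mul_gamma_eq_mul {x y : H →L[ℂ] H} (hx : x ∈ N.flowFixed) (hy : y ∈ N.M) :
    x * N.gamma y = y * x := by
  rw [h.mul_eq_gamma_mul hx (N.gamma_mem hy), N.gamma_gamma]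

theorem flowFixed_subset_centerSet : N.flowFixed ⊆ N.centerSet := by
  refine fun x hx => ⟨hx.1, fun y hy => ?_⟩
  have hx_star := N.star_mem_flowFixed hx
  have hcancel : N.gamma y * (x * star x) = y * (x * star x) := by
    calc N.gamma y * (x * star x) = x * (star x * y) := by
          rw [← h.mul_eq_gamma_mul (N.mul_mem_flowFixed hx hx_star) hy, mul_assoc]
      _ = (x * N.gamma y) * star x := by rw [h.mul_eq_gamma_mul hx_star hy, mul_assoc]
      _ = y * (x * star x) := by rw [h.mul_gamma_eq_mul hx hy, mul_assoc]
  rw [h.mul_eq_gamma_mul hx hy, mul_eq_mul_of_mul_mul_star_eq hcancel]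

theorem flowFixed_subset_twistedCenter : N.flowFixed ⊆ N.twistedCenter := by
  refine fun x hx => ⟨hx.1, congrFun (Continuous.ext_on N.cyclic ?_ (by fun_prop) ?_)⟩
  · have hJ_cont : Continuous N.J := N.JIsometry.continuous
    fun_prop
  have hx_star := N.star_mem_flowFixed hx
  -- The orbit of `x* Ω` is constant, hence so is its analytic continuation.
  have hJ : N.J (star x N.Ω) = x N.Ω := by
    simpa only [star_star] using N.S_cond (star x) hx_star.1 (fun _ => star x N.Ω)
      (differentiable_const _) fun t => by rw [← hx_star.2, N.U_Ω]
  rintro _ ⟨y, hy, rfl⟩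
  calc N.J (star x (N.J (y N.Ω))) = y (x N.Ω) := by
        rw [N.tomita _ hx_star.1 y hy, N.J_Ω, hJ]
    _ = x (N.gamma y N.Ω) := (DFunLike.congr_fun (h.mul_gamma_eq_mul hx hy) N.Ω).symm
    _ = x (N.V (y N.Ω)) := by rw [N.gamma_apply_Ω]

end GradedAsympAbelian

end GradedVN

/-- (i) If the modular flow of `(M, Ω)` is asymptotically abelian, then the
centralizer `Z_Ω(M)` equals the center `Z(M)`, and in particular `Z(M,V) ⊆ Z(M)`.
(ii) If `M` is `V`-graded asymptotically abelian, then `Z(M,V) = Z_Ω(M) ⊆ Z(M)`. -/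
theorem asymptotically_abelian_twisted_center {H : Type*} [NormedAddCommGroup H]
    [InnerProductSpace ℂ H] [CompleteSpace H] (N : GradedVN H) :
    (N.AsympAbelian →
      N.centralizerSet = N.centerSet ∧ N.twistedCenter ⊆ N.centerSet) ∧
    (N.GradedAsympAbelian →
      N.twistedCenter = N.centralizerSet ∧ N.centralizerSet ⊆ N.centerSet) := by
  have hfixed := N.centralizerSet_subset_flowFixed
  have htwisted := N.twistedCenter_subset_centralizerSet
  refine ⟨fun h => ?_, fun h => ⟨?_, hfixed.trans h.flowFixed_subset_centerSet⟩⟩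
  · have hcenter := hfixed.trans h.flowFixed_subset_centerSet
    exact ⟨hcenter.antisymm N.centerSet_subset_centralizerSet, htwisted.trans hcenter⟩
  · exact htwisted.antisymm (hfixed.trans h.flowFixed_subset_twistedCenter)

end
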